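/- arXiv:1303.4104 — 3 statements merged into one kernel-verified Lean document; each statement's English description precedes it below -/
import Mathlib

section
/- Let B ⊆ ℝⁿ be an open set and P ⊆ B an arbitrary subset. Every map v_P : P → ℝᵐ that is Lipschitz with constant K is the restriction to P of a map v : ℝⁿ → ℝᵐ that is Lipschitz with the same constant K. Consequently, for every body P ⊆ B, the restriction map sending a locally Lipschitz map B → ℝᵐ to its restriction P → ℝᵐ is surjective onto the Lipschitz maps on P. -/
/-!
The first claim is Kirszbraun's theorem, and the second follows because a Lipschitz map is
locally Lipschitz.

The heart is the extension of a map on finitely many points by one more point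
(`exists_dist_le_of_finite`). Given `‖yᵢ - yⱼ‖ ≤ K ‖xᵢ - xⱼ‖` and a new point `x`, put
`rᵢ = K ‖x - xᵢ‖` and maximize the concave function
`φ(w) = ∑ wᵢ (‖yᵢ‖² - rᵢ²) - ‖∑ wᵢ yᵢ‖²` over the standard simplex. The variance identity
`∑ wᵢ ‖yᵢ‖² - ‖∑ wᵢ yᵢ‖² = ½ ∑ wᵢ wⱼ ‖yᵢ - yⱼ‖²`, applied to the `yᵢ` and to the `xᵢ - x`, shows
`φ ≤ 0`. At a maximizer `w`, the first-order condition in the direction of the `i`-th vertex reads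
`‖yᵢ - y‖² - rᵢ² ≤ φ(w) ≤ 0` with `y = ∑ wᵢ yᵢ`, so `y` is an admissible value at `x`.

Compactness of closed balls removes the finiteness assumption, and Zorn's lemma, applied to the
graphs of `K`-Lipschitz partial maps, yields a map on the whole space.
-/

open Set Topology
open scoped NNReal

section Kirszbraun

variable {E F : Type*} [NormedAddCommGroup E] [InnerProductSpace ℝ E]
  [NormedAddCommGroup F] [InnerProductSpace ℝ F]

/-- Variance identity: the variance of a weighted family of vectors is half its mean squared
pairwise distance. -/
lemma sum_mul_norm_sq_sub_norm_sq_sum {ι : Type*} [Fintype ι] (w : ι → ℝ) (hw : ∑ i, w i = 1)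
    (y : ι → F) :
    (∑ i, w i * ‖y i‖ ^ 2) - ‖∑ i, w i • y i‖ ^ 2
      = 1 / 2 * ∑ i, ∑ j, w i * w j * ‖y i - y j‖ ^ 2 := by
  have h1 : ‖∑ i, w i • y i‖ ^ 2 = ∑ i, ∑ j, w i * w j * inner ℝ (y i) (y j) := by
    rw [← real_inner_self_eq_norm_sq, sum_inner]
    refine Finset.sum_congr rfl fun i _ => ?_
    rw [inner_sum]
    refine Finset.sum_congr rfl fun j _ => ?_
    rw [real_inner_smul_left, real_inner_smul_right]
    ring
  have h2 : ∑ i, ∑ j, w i * w j * ‖y i‖ ^ 2 = ∑ i, w i * ‖y i‖ ^ 2 := by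
    refine Finset.sum_congr rfl fun i _ => ?_
    rw [← Finset.sum_mul, ← Finset.mul_sum, hw, mul_one]
  have h3 : ∑ i, ∑ j, w i * w j * ‖y j‖ ^ 2 = ∑ i, w i * ‖y i‖ ^ 2 := by
    rw [Finset.sum_comm, ← h2]
    refine Finset.sum_congr rfl fun i _ => Finset.sum_congr rfl fun j _ => ?_
    ring
  have h4 : ∑ i, ∑ j, w i * w j * ‖y i - y j‖ ^ 2
      = (∑ i, ∑ j, w i * w j * ‖y i‖ ^ 2) + (∑ i, ∑ j, w i * w j * ‖y j‖ ^ 2)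
        - 2 * ∑ i, ∑ j, w i * w j * inner ℝ (y i) (y j) := by
    simp only [Finset.mul_sum, ← Finset.sum_add_distrib, ← Finset.sum_sub_distrib]
    refine Finset.sum_congr rfl fun i _ => Finset.sum_congr rfl fun j _ => ?_
    rw [norm_sub_sq_real]
    ring
  rw [h4, h2, h3, h1]
  ring

/-- One-point extension of a `K`-Lipschitz map defined on finitely many points. -/
lemma exists_dist_le_of_finite {ι : Type*} [Fintype ι] [Nonempty ι] (K : ℝ≥0) (x : ι → E)
    (y : ι → F) (h : ∀ i j, dist (y i) (y j) ≤ K * dist (x i) (x j)) (p : E) :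
    ∃ q : F, ∀ i, dist q (y i) ≤ K * dist p (x i) := by
  classical
  set a : ι → ℝ := fun i => ‖y i‖ ^ 2 - (K * dist p (x i)) ^ 2 with ha
  set φ : (ι → ℝ) → ℝ := fun w => (∑ i, w i * a i) - ‖∑ i, w i • y i‖ ^ 2 with hφ
  obtain ⟨w, hwS, hmax⟩ := (isCompact_stdSimplex ℝ ι).exists_isMaxOn
    ⟨_, single_mem_stdSimplex ℝ (Classical.arbitrary ι)⟩
    (f := φ) (by apply Continuous.continuousOn; fun_prop)
  have hnonpos : φ w ≤ 0 := by
    have e1 := sum_mul_norm_sq_sub_norm_sq_sum w hwS.2 y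
    have e2 := sum_mul_norm_sq_sub_norm_sq_sum w hwS.2 (fun i => x i - p)
    have e3 : ∑ i, ∑ j, w i * w j * ‖y i - y j‖ ^ 2
        ≤ (K : ℝ) ^ 2 * ∑ i, ∑ j, w i * w j * ‖(x i - p) - (x j - p)‖ ^ 2 := by
      simp only [Finset.mul_sum]
      refine Finset.sum_le_sum fun i _ => Finset.sum_le_sum fun j _ => ?_
      have hij := h i j
      rw [dist_eq_norm, dist_eq_norm] at hij
      rw [sub_sub_sub_cancel_right]
      have hsq := pow_le_pow_left₀ (norm_nonneg _) hij 2
      have := mul_le_mul_of_nonneg_left hsq (mul_nonneg (hwS.1 i) (hwS.1 j))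
      linarith
    have e4 : ∑ i, w i * a i
        = (∑ i, w i * ‖y i‖ ^ 2) - (K : ℝ) ^ 2 * ∑ i, w i * ‖x i - p‖ ^ 2 := by
      rw [Finset.mul_sum, ← Finset.sum_sub_distrib]
      refine Finset.sum_congr rfl fun i _ => ?_
      rw [ha]
      simp only
      rw [dist_comm, dist_eq_norm]
      ring
    have e5 : 0 ≤ (K : ℝ) ^ 2 * ‖∑ i, w i • (x i - p)‖ ^ 2 := by positivity
    have e6 := congrArg (fun r => (K : ℝ) ^ 2 * r) e2
    rw [hφ]
    simp only
    rw [e4]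
    linarith
  set q : F := ∑ i, w i • y i with hq
  refine ⟨q, fun i => ?_⟩
  -- comparison of `φ` at `w` and at `(1 - t) w + t eᵢ`, where `eᵢ` is the `i`-th vertex
  have key : ∀ t : ℝ, 0 < t → t ≤ 1 →
      a i - (∑ j, w j * a j) - 2 * inner ℝ q (y i - q) ≤ t * ‖y i - q‖ ^ 2 := by
    intro t ht0 ht1
    have hmem : (1 - t) • w + t • (Pi.single i 1 : ι → ℝ) ∈ stdSimplex ℝ ι :=
      convex_stdSimplex ℝ ι hwS (single_mem_stdSimplex ℝ i) (by linarith) ht0.le (by ring)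
    have hle : φ ((1 - t) • w + t • (Pi.single i 1 : ι → ℝ)) ≤ φ w := hmax hmem
    have s1 : ∑ j, ((1 - t) • w + t • (Pi.single i 1 : ι → ℝ)) j * a j
        = (1 - t) * (∑ j, w j * a j) + t * a i := by
      simp [add_mul, Finset.sum_add_distrib, Finset.mul_sum, mul_assoc, Pi.single_apply]
    have s2 : ∑ j, ((1 - t) • w + t • (Pi.single i 1 : ι → ℝ)) j • y j
        = q + t • (y i - q) := by
      have : ∑ j, ((1 - t) • w + t • (Pi.single i 1 : ι → ℝ)) j • y j
          = (1 - t) • q + t • y i := by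
        rw [hq]
        simp [add_smul, Finset.sum_add_distrib, Finset.smul_sum, mul_smul, Pi.single_apply]
      rw [this]
      module
    have s3 : ‖q + t • (y i - q)‖ ^ 2
        = ‖q‖ ^ 2 + 2 * t * inner ℝ q (y i - q) + t ^ 2 * ‖y i - q‖ ^ 2 := by
      rw [norm_add_sq_real, real_inner_smul_right, norm_smul, mul_pow, Real.norm_eq_abs, sq_abs]
      ring
    simp only [hφ] at hle
    rw [s1, s2, s3] at hle
    refine le_of_mul_le_mul_left ?_ ht0
    linarith
  have hfirst : a i - (∑ j, w j * a j) - 2 * inner ℝ q (y i - q) ≤ 0 := by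
    by_contra! hpos
    set A := a i - (∑ j, w j * a j) - 2 * inner ℝ q (y i - q)
    set N := ‖y i - q‖ ^ 2
    have hN : 0 ≤ N := by positivity
    have hd : 0 < A + N + 1 := by linarith
    -- `t = A / (A + N + 1)` lies in `(0, 1]` and makes `t * N < A`
    have hk := key (A / (A + N + 1)) (by positivity) (by rw [div_le_one hd]; linarith)
    rw [div_mul_eq_mul_div, le_div_iff₀ hd] at hk
    nlinarith
  have hsq : ‖q - y i‖ ^ 2 ≤ (K * dist p (x i)) ^ 2 := by
    have hφw : (∑ j, w j * a j) - ‖q‖ ^ 2 ≤ 0 := hnonpos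
    have hai : a i = ‖y i‖ ^ 2 - (K * dist p (x i)) ^ 2 := rfl
    rw [inner_sub_right, real_inner_self_eq_norm_sq] at hfirst
    rw [norm_sub_sq_real]
    linarith
  rw [dist_eq_norm]
  exact le_of_sq_le_sq hsq (by positivity)

/-- One-point extension of a `K`-Lipschitz partial map with arbitrary domain, the partial map being
given by its graph `G`. -/
lemma exists_dist_le_of_graph [ProperSpace F] (K : ℝ≥0) (G : Set (E × F))
    (h : ∀ a ∈ G, ∀ b ∈ G, dist a.2 b.2 ≤ K * dist a.1 b.1) (p : E) :
    ∃ q : F, ∀ a ∈ G, dist q a.2 ≤ K * dist p a.1 := by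
  classical
  rcases G.eq_empty_or_nonempty with rfl | ⟨g, hg⟩
  · exact ⟨0, by simp⟩
  obtain ⟨q, -, hq⟩ := (isCompact_closedBall g.2 (K * dist p g.1)).inter_iInter_nonempty
    (fun a : G => Metric.closedBall a.1.2 (K * dist p a.1.1))
    (fun a => Metric.isClosed_closedBall) (by
      intro u
      -- the base point `g` is added to `u`, since `q` must also lie in the compact ball around `g.2`
      let v : Finset G := insert ⟨g, hg⟩ u
      have : Nonempty v := ⟨⟨⟨g, hg⟩, Finset.mem_insert_self _ _⟩⟩
      obtain ⟨q, hq⟩ := exists_dist_le_of_finite K (fun a : v => a.1.1.1) (fun a : v => a.1.1.2)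
        (fun a b => h _ a.1.2 _ b.1.2) p
      refine ⟨q, hq ⟨⟨g, hg⟩, Finset.mem_insert_self _ _⟩, ?_⟩
      simp only [Set.mem_iInter]
      exact fun a ha => hq ⟨a, Finset.mem_insert_of_mem ha⟩)
  exact ⟨q, fun a ha => Set.mem_iInter.1 hq ⟨a, ha⟩⟩

/-- **Kirszbraun's theorem**. -/
lemma LipschitzOnWith.exists_lipschitzWith_eqOn [ProperSpace F] {K : ℝ≥0} {f : E → F} {s : Set E}
    (hf : LipschitzOnWith K f s) : ∃ v : E → F, LipschitzWith K v ∧ Set.EqOn v f s := by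
  let S : Set (Set (E × F)) := {G | ∀ a ∈ G, ∀ b ∈ G, dist a.2 b.2 ≤ K * dist a.1 b.1}
  have h0 : (fun x => (x, f x)) '' s ∈ S := by
    rintro _ ⟨x, hx, rfl⟩ _ ⟨y, hy, rfl⟩
    exact hf.dist_le_mul x hx y hy
  obtain ⟨G, hsG, hG⟩ := zorn_subset_nonempty S (by
    intro c hcS hc _
    refine ⟨⋃₀ c, ?_, fun t ht => Set.subset_sUnion_of_mem ht⟩
    rintro a ⟨A, hA, haA⟩ b ⟨C, hC, hbC⟩
    rcases hc.total hA hC with hAC | hCA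
    · exact hcS hC a (hAC haA) b hbC
    · exact hcS hA a haA b (hCA hbC)) _ h0
  have hGS : ∀ a ∈ G, ∀ b ∈ G, dist a.2 b.2 ≤ K * dist a.1 b.1 := hG.prop
  have htotal : ∀ x, ∃ y, (x, y) ∈ G := by
    intro x
    obtain ⟨q, hq⟩ := exists_dist_le_of_graph K G hGS x
    have hins : insert (x, q) G ∈ S := by
      rintro a (rfl | ha) b (rfl | hb)
      · simp
      · exact hq b hb
      · rw [dist_comm, dist_comm a.1]
        exact hq a ha
      · exact hGS a ha b hb
    exact ⟨q, hG.le_of_ge hins (Set.subset_insert _ _) (Set.mem_insert _ _)⟩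
  choose v hv using htotal
  refine ⟨v, LipschitzWith.of_dist_le_mul fun x y => hGS _ (hv x) _ (hv y), fun x hx => ?_⟩
  -- both `(x, v x)` and `(x, f x)` lie in `G`, so their second components are at distance `K * 0`
  have := hGS _ (hv x) _ (hsG ⟨x, hx, rfl⟩)
  simpa using this

end Kirszbraun

/-- **Kirszbraun extension and surjectivity of the restriction map.**
Let `B ⊆ ℝⁿ` be open and `P ⊆ B` a subset.  Every map `vP` that is Lipschitz with
constant `K` on `P` extends to a map `v : ℝⁿ → ℝᵐ` that is Lipschitz with the same
constant `K`; consequently there is a locally Lipschitz map `w` on `B` restricting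
to `vP` on `P`, i.e. the restriction map from locally Lipschitz maps on `B` to
Lipschitz maps on `P` is surjective. -/
theorem extension_of_lipschitz_on_body
    (n m : ℕ) (B : Set (EuclideanSpace ℝ (Fin n))) (hB : IsOpen B)
    (P : Set (EuclideanSpace ℝ (Fin n))) (hPB : P ⊆ B)
    (K : ℝ≥0) (vP : EuclideanSpace ℝ (Fin n) → EuclideanSpace ℝ (Fin m))
    (hvP : LipschitzOnWith K vP P) :
    (∃ v : EuclideanSpace ℝ (Fin n) → EuclideanSpace ℝ (Fin m),
        LipschitzWith K v ∧ Set.EqOn v vP P) ∧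
    (∃ w : EuclideanSpace ℝ (Fin n) → EuclideanSpace ℝ (Fin m),
        LocallyLipschitzOn B w ∧ Set.EqOn w vP P) := by
  obtain ⟨v, hv, hvP'⟩ := hvP.exists_lipschitzWith_eqOn
  exact ⟨⟨v, hv, hvP'⟩, v, hv.locallyLipschitz.locallyLipschitzOn, hvP'⟩
end

section
/- Let B ⊆ ℝⁿ be open and let κ : B → ℝⁿ be injective and a Lipschitz immersion, i.e. every point x ∈ B has a neighborhood U_x ⊆ B and constants 0 < c_x ≤ d_x < ∞ with c_x|y−z| ≤ |κ(y)−κ(z)| ≤ d_x|y−z| for all y, z ∈ U_x. Then κ(B) is an open subset of ℝⁿ, κ is a homeomorphism of B onto κ(B), and the inverse map κ⁻¹ : κ(B) → B is locally Lipschitz. -/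
open Set Topology
open scoped NNReal

/-!
The content is that `κ` maps neighbourhoods to neighbourhoods; continuity and the Lipschitz bound
for the inverse are read off from the bi-Lipschitz inequalities. This is invariance of domain, and
the bi-Lipschitz hypothesis allows every map in its proof to be Lipschitz.

* `no_locallyLipschitz_retraction`: the analytic proof of the no-retraction theorem (Milnor,
  Rogers) works for Lipschitz maps, with Rademacher's theorem and the change of variables formula.
  For a retraction `r` the integral over the ball of the Jacobian of `(1 - t) • id + t • r` is a
  polynomial in `t`, equal to the volume of the ball for small `t` and to `0` at `t = 1`.
* `exists_zero`: hence a locally Lipschitz map close to the identity on a ball has a zero there.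
* `image_mem_nhds`: if `κ` were not open at a point, a Lipschitz extension of its local inverse
  could be perturbed so as to lose its zero, following Kulpa's proof of invariance of domain. Since
  the extension is Lipschitz, it maps small spheres to null sets, and this makes the
  perturbation possible.
-/

section Helpers
open MeasureTheory Metric

/-! ### Locally Lipschitz maps -/

variable {E : Type*} [NormedAddCommGroup E] [InnerProductSpace ℝ E]

theorem locallyLipschitz_smul {α : Type*} [PseudoEMetricSpace α] {a : α → ℝ} {g : α → E}
    (ha : LocallyLipschitz a) (hg : LocallyLipschitz g) :
    LocallyLipschitz (fun x => a x • g x) := by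
  have h : LocallyLipschitz (fun p : ℝ × E => p.1 • p.2) :=
    ContDiff.locallyLipschitz (𝕂 := ℝ) (contDiff_fst.smul contDiff_snd)
  exact h.comp (ha.prodMk hg)

theorem locallyLipschitz_inv_max {η : ℝ} (hη : 0 < η) : LocallyLipschitz (fun t : ℝ => (max t η)⁻¹) := by
  have : LipschitzWith (Real.toNNReal ((η * η)⁻¹)) (fun t : ℝ => (max t η)⁻¹) := by
    apply LipschitzWith.of_dist_le_mul
    intro s t
    rw [Real.coe_toNNReal _ (by positivity), Real.dist_eq, Real.dist_eq]
    have hs : η ≤ max s η := le_max_right _ _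
    have ht : η ≤ max t η := le_max_right _ _
    have hst : |max t η - max s η| ≤ |s - t| := by
      rw [abs_sub_comm s t]
      exact abs_max_sub_max_le_abs _ _ _
    have hs0 : 0 < max s η := by linarith
    have ht0 : 0 < max t η := by linarith
    rw [inv_sub_inv hs0.ne' ht0.ne', abs_div, abs_of_pos (mul_pos hs0 ht0), div_eq_inv_mul]
    gcongr
  exact this.locallyLipschitz

/-- A radial rescaling which, on `η ≤ ‖y‖`, pushes `y` out to the sphere of radius `a` when
`‖y‖ ≤ a` and fixes `y` when `a ≤ ‖y‖`; the cut-off `η` removes the singularity at the origin. -/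
theorem locallyLipschitz_radial {a η : ℝ} (hη : 0 < η) :
    LocallyLipschitz (fun y : E => (max a ‖y‖ * (max ‖y‖ η)⁻¹) • y) := by
  have hn : LocallyLipschitz (fun y : E => ‖y‖) := lipschitzWith_one_norm.locallyLipschitz
  exact locallyLipschitz_smul (locallyLipschitz_smul (hn.const_max a)
    ((locallyLipschitz_inv_max hη).comp hn)) LocallyLipschitz.id

variable [FiniteDimensional ℝ E]

/-! ### Lipschitz retractions onto the sphere do not exist -/

theorem exists_det_poly (A : E →L[ℝ] E) : ∃ p : Polynomial ℝ,
    p.natDegree ≤ Module.finrank ℝ E ∧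
    ∀ t : ℝ, p.eval t = (ContinuousLinearMap.id ℝ E + t • A).det := by
  let b := Module.finBasis ℝ E
  let M := LinearMap.toMatrix b b (A : E →ₗ[ℝ] E)
  refine ⟨_, (Polynomial.natDegree_det_X_add_C_le M 1).trans (by simp), fun t => ?_⟩
  have h1 : (ContinuousLinearMap.id ℝ E + t • A).det =
      (LinearMap.toMatrix b b ((ContinuousLinearMap.id ℝ E + t • A : E →L[ℝ] E) : E →ₗ[ℝ] E)).det :=
    (LinearMap.det_toMatrix b _).symm
  rw [h1, ← Polynomial.coe_evalRingHom, RingHom.map_det]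
  congr 1
  have h2 : ((ContinuousLinearMap.id ℝ E + t • A : E →L[ℝ] E) : E →ₗ[ℝ] E) =
    LinearMap.id + t • (A : E →ₗ[ℝ] E) := rfl
  have h3 : LinearMap.toMatrix b b (LinearMap.id + t • (A : E →ₗ[ℝ] E)) = 1 + t • M := by
    rw [map_add, map_smul, LinearMap.toMatrix_id]
  rw [h2, h3]
  ext i j
  by_cases hij : i = j <;> simp [M, hij, add_comm] <;> ring

/-- The determinant of `1 + s • A` is `1` at `s = 0` and, as `‖s • A‖ < 1`, never vanishes for
`s ∈ [0, t]`, so it stays positive. -/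
theorem det_pos_of_small (A : E →L[ℝ] E) {K : ℝ} (hA : ‖A‖ ≤ K) {t : ℝ} (ht : 0 ≤ t)
    (htK : t * K < 1) : 0 < (ContinuousLinearMap.id ℝ E + t • A).det := by
  obtain ⟨p, -, hp⟩ := exists_det_poly A
  rw [← hp]
  have hne : ∀ s ∈ Icc 0 t, p.eval s ≠ 0 := by
    intro s hs h0
    rw [hp] at h0
    obtain ⟨v, hv, hv0⟩ := (Submodule.ne_bot_iff _).1 (LinearMap.bot_lt_ker_of_det_eq_zero h0).ne'
    have hv1 : v + s • A v = 0 := hv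
    have hv2 : ‖v‖ = s * ‖A v‖ := by
      rw [eq_neg_of_add_eq_zero_left hv1, norm_neg, norm_smul, Real.norm_of_nonneg hs.1]
      congr 2
      rw [← eq_neg_of_add_eq_zero_left hv1]
    have hv3 : 0 < ‖v‖ := norm_pos_iff.2 hv0
    have hK : 0 ≤ K := (norm_nonneg _).trans hA
    have h4 : s * ‖A v‖ ≤ t * (K * ‖v‖) := by
      have := A.le_of_opNorm_le hA v
      have := hs.1
      have := hs.2
      gcongr
    nlinarith
  by_contra! hneg
  have h0 : p.eval 0 = 1 := by rw [hp]; simp [ContinuousLinearMap.det]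
  obtain ⟨s, hs, hs0⟩ := intermediate_value_Icc' ht p.continuousOn
    (show (0 : ℝ) ∈ Icc (p.eval t) (p.eval 0) from ⟨hneg, by rw [h0]; norm_num⟩)
  exact hne s hs hs0

theorem lipschitz_of_zero_outside {u : E → E} (hu : LocallyLipschitz u) {R : ℝ} (hR : 0 < R)
    (h0 : ∀ x, R ≤ ‖x‖ → u x = 0) : ∃ K : ℝ≥0, LipschitzWith K u := by
  obtain ⟨K, hK⟩ := hu.locallyLipschitzOn.exists_lipschitzOnWith_of_compact
    (isCompact_closedBall (0 : E) (2 * R))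
  obtain ⟨M, hM⟩ := (isCompact_closedBall (0 : E) (2 * R)).exists_bound_of_continuousOn
    hu.continuous.continuousOn
  have hM0 : 0 ≤ M := (norm_nonneg _).trans (hM 0 (by simp [hR.le]))
  have key : ∀ x y, ‖x‖ ≤ ‖y‖ → ‖u x - u y‖ ≤ max (K : ℝ) (M / R) * ‖x - y‖ := by
    intro x y hxy
    by_cases hy : ‖y‖ ≤ 2 * R
    · calc _ ≤ (K : ℝ) * ‖x - y‖ := by
            have := hK.dist_le_mul x (by simpa using hxy.trans hy) y (by simpa using hy)
            rwa [dist_eq_norm, dist_eq_norm] at this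
        _ ≤ _ := by gcongr; exact le_max_left _ _
    · push Not at hy
      rw [h0 y (by linarith), sub_zero]
      by_cases hx : R ≤ ‖x‖
      · rw [h0 x hx, norm_zero]; positivity
      · push Not at hx
        have h1 : R ≤ ‖x - y‖ := by
          have := norm_sub_norm_le y x
          rw [norm_sub_rev] at this
          linarith
        calc ‖u x‖ ≤ M := hM x (by simp; linarith)
          _ = M / R * R := by field_simp
          _ ≤ M / R * ‖x - y‖ := by gcongr
          _ ≤ _ := by gcongr; exact le_max_right _ _
  refine ⟨⟨max (K : ℝ) (M / R), le_max_of_le_left K.2⟩, LipschitzWith.of_dist_le_mul fun x y => ?_⟩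
  rw [dist_eq_norm, dist_eq_norm]
  rcases le_total ‖x‖ ‖y‖ with h | h
  · exact key x y h
  · rw [norm_sub_rev, norm_sub_rev x]; exact key y x h

/-- A small Lipschitz perturbation of the identity is a bijection of `E` (surjectivity is the
contraction principle); being the identity outside the ball, it maps the ball onto itself. -/
theorem injective_and_image_ball_eq {u : E → E} {K : ℝ≥0} (hu : LipschitzWith K u) {R : ℝ}
    (h0 : ∀ x, R ≤ ‖x‖ → u x = 0) {t : ℝ} (ht : 0 ≤ t) (htK : t * K < 1) :
    Function.Injective (fun x => x + t • u x) ∧ (fun x => x + t • u x) '' ball 0 R = ball 0 R := by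
  have hinj : Function.Injective (fun x => x + t • u x) := by
    intro x y hxy
    have h1 : x - y = t • (u y - u x) := by
      simp only at hxy
      rw [smul_sub, sub_eq_sub_iff_add_eq_add, hxy]; abel
    have h2 := hu.dist_le_mul x y
    rw [dist_eq_norm, dist_eq_norm] at h2
    have h3 : ‖x - y‖ = t * ‖u x - u y‖ := by
      conv_lhs => rw [h1]
      rw [norm_smul, Real.norm_of_nonneg ht, norm_sub_rev]
    have h4 : ‖x - y‖ ≤ t * (K * ‖x - y‖) := by
      conv_lhs => rw [h3]
      gcongr
    have := norm_nonneg (x - y)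
    exact sub_eq_zero.1 (norm_eq_zero.1 (by nlinarith))
  have hsurj : Function.Surjective (fun x => x + t • u x) := by
    intro y
    have hc : ContractingWith (Real.toNNReal t * K) (fun x => y - t • u x) := by
      refine ⟨?_, LipschitzWith.of_dist_le_mul fun a b => ?_⟩
      · rw [← NNReal.coe_lt_coe]; simpa [Real.coe_toNNReal _ ht] using htK
      · have h2 := hu.dist_le_mul a b
        rw [dist_sub_left, dist_smul₀, Real.norm_of_nonneg ht, NNReal.coe_mul,
          Real.coe_toNNReal _ ht, mul_assoc]
        gcongr
    refine ⟨hc.fixedPoint, ?_⟩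
    have := hc.fixedPoint_isFixedPt
    unfold Function.IsFixedPt at this
    simp only at this ⊢
    conv_lhs => enter [1]; rw [← this]
    abel
  refine ⟨hinj, ?_⟩
  have hout : ∀ x, R ≤ ‖x‖ → x + t • u x = x := fun x hx => by simp [h0 x hx]
  apply Subset.antisymm
  · rintro _ ⟨x, hx, rfl⟩
    by_contra hn
    have hn' : R ≤ ‖x + t • u x‖ := by simpa using hn
    have := hinj (hout _ hn')
    simp only at this
    rw [this] at hn'
    simp at hx
    linarith
  · intro y hy
    obtain ⟨x, rfl⟩ := hsurj y
    refine ⟨x, ?_, rfl⟩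
    by_contra hn
    have hn' : R ≤ ‖x‖ := by simpa using hn
    simp only [hout x hn'] at hy
    exact hn hy


-- Hausdorff measure in the top dimension: a Haar measure for which Lipschitz maps visibly
-- preserve null sets.
local notation "μE" => (μH[(Module.finrank ℝ E : ℝ)] : Measure E)

section Measure

variable [MeasurableSpace E] [BorelSpace E]

/-- For small `t` the map `x ↦ x + t • u x` maps the ball bijectively onto itself, so by the change
of variables formula its Jacobian, which exists a.e. by Rademacher's theorem and is positive,
integrates to the volume of the ball. -/
theorem integral_det_eq {u : E → E} {K : ℝ≥0} (hu : LipschitzWith K u) {R : ℝ}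
    (h0 : ∀ x, R ≤ ‖x‖ → u x = 0) {t : ℝ} (ht : 0 ≤ t) (htK : t * K < 1) :
    IntegrableOn (fun x => (ContinuousLinearMap.id ℝ E + t • fderiv ℝ u x).det)
      (ball 0 R ∩ {x | DifferentiableAt ℝ u x}) μE ∧
    ∫ x in ball 0 R ∩ {x | DifferentiableAt ℝ u x},
      (ContinuousLinearMap.id ℝ E + t • fderiv ℝ u x).det ∂μE = (μE).real (ball 0 R) := by
  have : (μE).IsAddHaarMeasure := isAddHaarMeasure_hausdorffMeasure
  set s : Set E := ball 0 R ∩ {x | DifferentiableAt ℝ u x} with hs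
  set f : E → E := fun x => x + t • u x with hf
  have hsm : MeasurableSet s :=
    measurableSet_ball.inter (measurableSet_of_differentiableAt ℝ u)
  obtain ⟨hinj, himg⟩ := injective_and_image_ball_eq hu h0 ht htK
  have hfL : ∃ C : ℝ≥0, LipschitzWith C f :=
    ⟨_, LipschitzWith.id.add ((lipschitzWith_smul t).comp hu)⟩
  obtain ⟨C, hC⟩ := hfL
  have hnull : μE (f '' (ball 0 R \ s)) = 0 := by
    have h1 : μE (ball 0 R \ s) = 0 := by
      refine measure_mono_null ?_ (ae_iff.1 (hu.ae_differentiableAt (μ := μE)))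
      rintro x ⟨hx, hxs⟩ hd
      exact hxs ⟨hx, hd⟩
    have h2 := (hC.lipschitzOnWith (s := ball 0 R \ s)).hausdorffMeasure_image_le
      (d := (Module.finrank ℝ E : ℝ)) (by positivity)
    rw [h1, mul_zero] at h2
    exact le_antisymm h2 bot_le
  have hmeas : μE (f '' s) = μE (ball 0 R) := by
    apply le_antisymm
    · conv_rhs => rw [← himg]
      exact measure_mono (image_mono inter_subset_left)
    · calc μE (ball 0 R) = μE (f '' s ∪ f '' (ball 0 R \ s)) := by
            rw [← image_union, union_sdiff_cancel inter_subset_left, himg]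
        _ ≤ _ := measure_union_le _ _
        _ = _ := by rw [hnull, add_zero]
  have hder : ∀ x ∈ s, HasFDerivWithinAt f
      (ContinuousLinearMap.id ℝ E + t • fderiv ℝ u x) s x := fun x hx =>
    ((hasFDerivAt_id x).add
      ((hx.2 : DifferentiableAt ℝ u x).hasFDerivAt.const_smul t)).hasFDerivWithinAt
  have hcv := lintegral_abs_det_fderiv_eq_addHaar_image μE hsm hder hinj.injOn
  have hpos : ∀ x ∈ s, 0 < (ContinuousLinearMap.id ℝ E + t • fderiv ℝ u x).det := fun x _ =>
    det_pos_of_small _ (norm_fderiv_le_of_lipschitz ℝ hu) ht htK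
  have hcv' : ∫⁻ x in s, ENNReal.ofReal
      ((ContinuousLinearMap.id ℝ E + t • fderiv ℝ u x).det) ∂μE = μE (ball 0 R) := by
    rw [← hmeas, ← hcv]
    refine setLIntegral_congr_fun hsm fun x hx => ?_
    simp only [abs_of_pos (hpos x hx)]
  have hmea : Measurable (fun x => (ContinuousLinearMap.id ℝ E + t • fderiv ℝ u x).det) :=
    ContinuousLinearMap.continuous_det.measurable.comp
      ((measurable_fderiv ℝ u).const_smul t |>.const_add _)
  have hnn : 0 ≤ᵐ[(μE).restrict s]
      (fun x => (ContinuousLinearMap.id ℝ E + t • fderiv ℝ u x).det) :=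
    (ae_restrict_iff' hsm).2 (Filter.Eventually.of_forall fun x hx => (hpos x hx).le)
  constructor
  · refine ⟨hmea.aestronglyMeasurable, ?_⟩
    rw [hasFiniteIntegral_iff_ofReal hnn, hcv']
    exact measure_ball_lt_top
  · rw [integral_eq_lintegral_of_nonneg_ae hnn hmea.aestronglyMeasurable, hcv']
    rfl

/-- There is no locally Lipschitz retraction of the ball onto its boundary sphere. With
`u = r - id`, the Jacobian of `id + t • u` is at each point a polynomial in `t` of degree at most
`dim E`. Its integral over the ball is the volume of the ball for all small `t`, hence for `t = 1`;
but there the Jacobian is that of `r`, which vanishes because `‖r‖` is constant. -/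
theorem no_locallyLipschitz_retraction {r : E → E} (hr : LocallyLipschitz r) {R : ℝ} (hR : 0 < R)
    (hout : ∀ x, R ≤ ‖x‖ → r x = x) (hin : ∀ x, ‖x‖ ≤ R → ‖r x‖ = R) : False := by
  have : (μE).IsAddHaarMeasure := isAddHaarMeasure_hausdorffMeasure
  set u : E → E := fun x => r x - x with hu
  have h0 : ∀ x, R ≤ ‖x‖ → u x = 0 := fun x hx => by simp [hu, hout x hx]
  have huL : LocallyLipschitz u := by
    have h : LocallyLipschitz (fun p : E × E => p.1 - p.2) :=
      ContDiff.locallyLipschitz (𝕂 := ℝ) (contDiff_fst.sub contDiff_snd)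
    exact h.comp (hr.prodMk LocallyLipschitz.id)
  obtain ⟨K, hK⟩ := lipschitz_of_zero_outside huL hR h0
  set s : Set E := ball 0 R ∩ {x | DifferentiableAt ℝ u x} with hs
  have hsm : MeasurableSet s :=
    measurableSet_ball.inter (measurableSet_of_differentiableAt ℝ u)
  set N := Module.finrank ℝ E with hN
  -- Interpolation nodes in the range of small `t`; Lagrange interpolation at `t = 1` replaces the
  -- comparison of polynomial coefficients.
  let v : ℕ → ℝ := fun i => i / ((N + 1) * (K + 1))
  have hKp : (0 : ℝ) < K + 1 := by positivity
  have hv : ∀ i ∈ Finset.range (N + 1), 0 ≤ v i ∧ v i * K < 1 := by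
    intro i hi
    refine ⟨by positivity, ?_⟩
    have hi' : (i : ℝ) ≤ N + 1 := by
      have := Finset.mem_range.1 hi
      exact_mod_cast this.le
    simp only [v]
    rw [div_mul_eq_mul_div, div_lt_one (by positivity)]
    have : (0 : ℝ) ≤ K := K.2
    nlinarith
  have hvinj : Set.InjOn v (Finset.range (N + 1)) := by
    intro i _ j _ hij
    simp only [v] at hij
    have : (i : ℝ) = j := by field_simp at hij; exact hij
    exact_mod_cast this
  let w : ℕ → ℝ := fun i => (Lagrange.basis (Finset.range (N + 1)) v i).eval 1
  have hw1 : ∑ i ∈ Finset.range (N + 1), w i = 1 := by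
    have := congrArg (Polynomial.eval 1) (Lagrange.sum_basis hvinj ⟨0, by simp⟩)
    simpa [Polynomial.eval_finsetSum] using this
  have hint := fun i hi => integral_det_eq hK h0 (hv i hi).1 (hv i hi).2
  have hzero : ∀ x ∈ s, ∑ i ∈ Finset.range (N + 1),
      w i * (ContinuousLinearMap.id ℝ E + v i • fderiv ℝ u x).det = 0 := by
    intro x hx
    obtain ⟨p, hpd, hp⟩ := exists_det_poly (fderiv ℝ u x)
    have hdeg : p.degree < (Finset.range (N + 1)).card := by
      rw [Finset.card_range]
      refine lt_of_le_of_lt Polynomial.degree_le_natDegree ?_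
      exact_mod_cast Nat.lt_succ_of_le hpd
    have h1 := congrArg (Polynomial.eval 1) (Lagrange.eq_interpolate hvinj hdeg)
    rw [Lagrange.interpolate_apply, Polynomial.eval_finsetSum] at h1
    have h2 : p.eval 1 = 0 := by
      rw [hp]
      have hd : HasFDerivAt r (ContinuousLinearMap.id ℝ E + (1 : ℝ) • fderiv ℝ u x) x := by
        have := (hasFDerivAt_id x).add
          ((hx.2 : DifferentiableAt ℝ u x).hasFDerivAt.const_smul (1 : ℝ))
        refine this.congr_of_eventuallyEq (Filter.Eventually.of_forall fun y => ?_)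
        simp [hu]
      set D := ContinuousLinearMap.id ℝ E + (1 : ℝ) • fderiv ℝ u x
      by_contra hdet
      have hxR : ‖x‖ < R := by simpa using hx.1
      have hconst : (fun y => ‖r y‖ ^ 2) =ᶠ[𝓝 x] fun _ => R ^ 2 := by
        filter_upwards [isOpen_ball.mem_nhds hx.1] with y hy
        rw [hin y (by simpa using (mem_ball_zero_iff.1 hy).le)]
      -- Differentiating `‖r‖ ^ 2 = R ^ 2`: the range of `D` is orthogonal to `r x`.
      have h3 := hd.norm_sq.unique ((hasFDerivAt_const (R ^ 2) x).congr_of_eventuallyEq hconst)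
      obtain ⟨z, hz⟩ : ∃ z, D z = r x := by
        let e := LinearEquiv.ofIsUnitDet (v := Module.finBasis ℝ E) (v' := Module.finBasis ℝ E)
          (f := (D : E →ₗ[ℝ] E)) (by
            rw [LinearMap.det_toMatrix]; exact isUnit_iff_ne_zero.2 hdet)
        exact ⟨e.symm (r x), e.apply_symm_apply (r x)⟩
      have h4 := congrArg (fun L => L z) h3
      simp [hz, hin x hxR.le, hR.ne'] at h4
    rw [← h2, h1]
    refine Finset.sum_congr rfl fun i _ => ?_
    rw [Polynomial.eval_mul, Polynomial.eval_C, hp, mul_comm]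
  have hI : ∫ x in s, ∑ i ∈ Finset.range (N + 1),
      w i * (ContinuousLinearMap.id ℝ E + v i • fderiv ℝ u x).det ∂μE = (μE).real (ball 0 R) := by
    rw [integral_finsetSum _ fun i hi => (hint i hi).1.const_mul (w i)]
    rw [Finset.sum_congr rfl fun i hi => by rw [integral_const_mul, (hint i hi).2],
      ← Finset.sum_mul, hw1, one_mul]
  rw [setIntegral_congr_fun hsm hzero, integral_zero] at hI
  have : 0 < (μE).real (ball 0 R) :=
    ENNReal.toReal_pos (measure_ball_pos _ _ hR).ne' measure_ball_lt_top.ne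
  linarith

end Measure

/-! ### Zeros of maps close to the identity, and openness -/

/-- If `h` had no zero, interpolating it with the identity near the boundary sphere and projecting
radially to that sphere would give a retraction. -/
theorem exists_zero {h : E → E} (hh : LocallyLipschitz h) {R : ℝ} (hR : 0 < R)
    (hclose : ∀ x, ‖x‖ ≤ R → ‖h x - x‖ ≤ R / 4) : ∃ x, ‖x‖ ≤ R ∧ h x = 0 := by
  by_contra! hne
  let : MeasurableSpace E := borel E
  have : BorelSpace E := ⟨rfl⟩
  let θ : E → ℝ := fun x => max 0 (min 1 (4 / R * (R - ‖x‖)))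
  -- The slope `4 / R` makes `θ x * (R / 4) ≤ R - ‖x‖`, which keeps `H` inside the ball.
  let H : E → E := fun x => x + θ x • (h x - x)
  have hsub : LocallyLipschitz (fun p : E × E => p.1 - p.2) :=
    ContDiff.locallyLipschitz (𝕂 := ℝ) (contDiff_fst.sub contDiff_snd)
  have hadd : LocallyLipschitz (fun p : E × E => p.1 + p.2) :=
    ContDiff.locallyLipschitz (𝕂 := ℝ) (contDiff_fst.add contDiff_snd)
  have hn : LocallyLipschitz (fun y : E => ‖y‖) := lipschitzWith_one_norm.locallyLipschitz
  have haff : LocallyLipschitz (fun a : ℝ => 4 / R * (R - a)) :=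
    ContDiff.locallyLipschitz (𝕂 := ℝ) (by fun_prop)
  have hθL : LocallyLipschitz θ := ((haff.comp hn).const_min 1).const_max 0
  have hHL : LocallyLipschitz H :=
    hadd.comp (LocallyLipschitz.id.prodMk (locallyLipschitz_smul hθL
      (hsub.comp (hh.prodMk LocallyLipschitz.id))))
  have hθ0 : ∀ x, 0 ≤ θ x := fun x => le_max_left _ _
  have hθ1 : ∀ x, θ x ≤ 1 := fun x => max_le zero_le_one (min_le_left _ _)
  have hHout : ∀ x, R ≤ ‖x‖ → H x = x := by
    intro x hx
    have : θ x = 0 := max_eq_left ((min_le_right _ _).trans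
      (mul_nonpos_of_nonneg_of_nonpos (by positivity) (by linarith)))
    simp [H, this]
  have hdiff : ∀ x, ‖x‖ ≤ R → ‖H x - x‖ ≤ θ x * (R / 4) := by
    intro x hx
    simp only [H, add_sub_cancel_left, norm_smul, Real.norm_of_nonneg (hθ0 x)]
    exact mul_le_mul_of_nonneg_left (hclose x hx) (hθ0 x)
  have hHle : ∀ x, ‖x‖ ≤ R → ‖H x‖ ≤ R := by
    intro x hx
    have h1 := hdiff x hx
    have h2 : θ x ≤ 4 / R * (R - ‖x‖) :=
      max_le (mul_nonneg (by positivity) (by linarith)) (min_le_right _ _)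
    have h3 : θ x * (R / 4) ≤ R - ‖x‖ := by
      calc _ ≤ 4 / R * (R - ‖x‖) * (R / 4) := by gcongr
        _ = _ := by field_simp
    have h4 := norm_le_norm_add_norm_sub' (H x) x
    linarith
  have hHne : ∀ x, ‖x‖ ≤ R → H x ≠ 0 := by
    intro x hx h0
    by_cases hx2 : ‖x‖ ≤ R / 2
    · have : θ x = 1 := by
        have h1 : (1 : ℝ) ≤ 4 / R * (R - ‖x‖) := by
          rw [div_mul_eq_mul_div, le_div_iff₀ hR]; linarith
        simp [θ, min_eq_left h1]
      simp only [H, this, one_smul, add_sub_cancel] at h0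
      exact hne x hx h0
    · have h1 := hdiff x hx
      rw [h0, zero_sub, norm_neg] at h1
      have h2 := hθ1 x
      nlinarith
  obtain ⟨δ, hδ, hδH⟩ : ∃ δ > 0, ∀ x, ‖x‖ ≤ R → δ ≤ ‖H x‖ := by
    obtain ⟨x₀, hx₀, hmin⟩ := (isCompact_closedBall (0 : E) R).exists_isMinOn
      ⟨0, by simp [hR.le]⟩ hHL.continuous.norm.continuousOn
    exact ⟨‖H x₀‖, norm_pos_iff.2 (hHne x₀ (by simpa using hx₀)),
      fun x hx => hmin (by simpa using hx)⟩
  have hδR : δ ≤ R := (hδH 0 (by simp [hR.le])).trans (hHle 0 (by simp [hR.le]))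
  refine no_locallyLipschitz_retraction ((locallyLipschitz_radial (a := R) hδ).comp hHL) hR
    (fun x hx => ?_) fun x hx => ?_
  · simp only [Function.comp, hHout x hx]
    rw [max_eq_right hx, max_eq_left (hδR.trans hx), mul_inv_cancel₀ (by linarith), one_smul]
  · have h1 := hδH x hx
    simp only [Function.comp]
    rw [max_eq_left (hHle x hx), max_eq_left h1, norm_smul, norm_mul, norm_inv, norm_norm,
      Real.norm_of_nonneg hR.le, mul_assoc, inv_mul_cancel₀ (by linarith), mul_one]

/-- Openness at the origin for a Lipschitz map `F` with a Lipschitz left inverse `G` on a ball.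
Otherwise some `c` near `0` is missed by `F`. Pushing `F x` radially away from `c` onto the
complement of a small ball, then applying `G - v`, gives a map uniformly close to the identity.
For a suitable small `v` it has no zero: where `F x` is far from `c` because `x = G (F x)` is then
bounded away from `0`, and where `F x` was moved to the small sphere because `v` avoids the null set `G '' sphere`. This contradicts `exists_zero`. -/
theorem image_mem_nhds {F G : E → E} {L M : ℝ≥0} (hF : LipschitzWith L F)
    (hG : LipschitzWith M G) {R : ℝ} (hR : 0 < R) (hF0 : F 0 = 0)
    (hGF : ∀ x, ‖x‖ ≤ R → G (F x) = x) : F '' closedBall 0 R ∈ 𝓝 (0 : E) := by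
  let : MeasurableSpace E := borel E
  have : BorelSpace E := ⟨rfl⟩
  have : (μE).IsAddHaarMeasure := isAddHaarMeasure_hausdorffMeasure
  by_contra hnot
  set ε : ℝ := R / (16 * (M + 1)) with hε
  have hεpos : 0 < ε := by positivity
  have hMε : M * (2 * ε) ≤ R / 8 := by
    rw [hε]
    have : (0 : ℝ) ≤ M := M.2
    rw [show (M : ℝ) * (2 * (R / (16 * (M + 1)))) = (M / (M + 1)) * (R / 8) by
      field_simp; ring]
    have : (M : ℝ) / (M + 1) ≤ 1 := by rw [div_le_one (by positivity)]; linarith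
    nlinarith
  obtain ⟨c, hcε, hc⟩ : ∃ c : E, ‖c‖ < ε ∧ c ∉ F '' closedBall 0 R := by
    by_contra! h
    exact hnot (Filter.mem_of_superset (ball_mem_nhds 0 hεpos)
      fun c hc => h c (by simpa using hc))
  obtain ⟨η, hη, hηF⟩ : ∃ η > 0, ∀ x, ‖x‖ ≤ R → η ≤ ‖F x - c‖ := by
    obtain ⟨x₀, hx₀, hmin⟩ := (isCompact_closedBall (0 : E) R).exists_isMinOn
      ⟨0, by simp [hR.le]⟩ (f := fun x => ‖F x - c‖)
      (hF.continuous.sub continuous_const).norm.continuousOn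
    exact ⟨‖F x₀ - c‖, norm_pos_iff.2 (fun h => hc ⟨x₀, hx₀, sub_eq_zero.1 h⟩),
      fun x hx => hmin (by simpa using hx)⟩
  obtain ⟨v, hv, hvS⟩ : ∃ v ∈ ball (0 : E) (min (ε / (L + 1)) (R / 8)), v ∉ G '' sphere c (2 * ε) := by
    by_contra! h
    have h1 : μE (G '' sphere c (2 * ε)) = 0 := by
      have h2 := (hG.lipschitzOnWith (s := sphere c (2 * ε))).hausdorffMeasure_image_le
        (d := (Module.finrank ℝ E : ℝ)) (by positivity)
      rw [Measure.addHaar_sphere_of_ne_zero μE c (by positivity), mul_zero] at h2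
      exact le_antisymm h2 bot_le
    exact (measure_ball_pos μE (0 : E) (by positivity)).ne' (measure_mono_null h h1)
  have hv1 : ‖v‖ < ε / (L + 1) := (mem_ball_zero_iff.1 hv).trans_le (min_le_left _ _)
  have hv2 : ‖v‖ < R / 8 := (mem_ball_zero_iff.1 hv).trans_le (min_le_right _ _)
  let ρ : E → E := fun y => (max (2 * ε) ‖y‖ * (max ‖y‖ η)⁻¹) • y
  let h : E → E := fun x => G (c + ρ (F x - c)) - v
  have hhL : LocallyLipschitz h := by
    have t1 : LocallyLipschitz (fun y : E => y - c) :=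
      ContDiff.locallyLipschitz (𝕂 := ℝ) (by fun_prop)
    have t2 : LocallyLipschitz (fun y : E => c + y) :=
      ContDiff.locallyLipschitz (𝕂 := ℝ) (by fun_prop)
    have t3 : LocallyLipschitz (fun y : E => y - v) :=
      ContDiff.locallyLipschitz (𝕂 := ℝ) (by fun_prop)
    exact t3.comp (hG.locallyLipschitz.comp (t2.comp ((locallyLipschitz_radial hη).comp
      (t1.comp hF.locallyLipschitz))))
  have hfar : ∀ x, ‖x‖ ≤ R → 2 * ε ≤ ‖F x - c‖ → c + ρ (F x - c) = F x := by
    intro x hx h2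
    have := hηF x hx
    simp only [ρ]
    rw [max_eq_right h2, max_eq_left this, mul_inv_cancel₀ (by linarith), one_smul, add_sub_cancel]
  have hnear : ∀ x, ‖x‖ ≤ R → ‖F x - c‖ ≤ 2 * ε → ‖ρ (F x - c)‖ = 2 * ε ∧
      ‖ρ (F x - c) - (F x - c)‖ ≤ 2 * ε := by
    intro x hx h2
    have h3 := hηF x hx
    have h4 : 0 < ‖F x - c‖ := by linarith
    simp only [ρ]
    rw [max_eq_left h2, max_eq_left h3]
    set y := F x - c
    constructor
    · rw [norm_smul, Real.norm_of_nonneg (by positivity), mul_assoc, inv_mul_cancel₀ h4.ne', mul_one]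
    · have h5 : (2 * ε * ‖y‖⁻¹) • y - y = (2 * ε * ‖y‖⁻¹ - 1) • y := by rw [sub_smul, one_smul]
      have h6 : 0 ≤ 2 * ε * ‖y‖⁻¹ - 1 := by
        rw [sub_nonneg, ← div_eq_mul_inv, le_div_iff₀ h4]; linarith
      rw [h5, norm_smul, Real.norm_of_nonneg h6, sub_mul, mul_assoc, inv_mul_cancel₀ h4.ne']
      linarith
  obtain ⟨x, hx, hx0⟩ := exists_zero hhL hR (by
    intro x hx
    have hM : ‖G (c + ρ (F x - c)) - x‖ ≤ M * (2 * ε) := by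
      rcases le_total (2 * ε) ‖F x - c‖ with h2 | h2
      · rw [hfar x hx h2, hGF x hx, sub_self, norm_zero]; positivity
      · have h3 := hG.dist_le_mul (c + ρ (F x - c)) (F x)
        rw [hGF x hx, dist_eq_norm, dist_eq_norm] at h3
        refine h3.trans ?_
        have h4 := (hnear x hx h2).2
        rw [show c + ρ (F x - c) - F x = ρ (F x - c) - (F x - c) by abel]
        gcongr
    calc ‖h x - x‖ = ‖(G (c + ρ (F x - c)) - x) - v‖ := by simp only [h]; congr 1; abel
      _ ≤ ‖G (c + ρ (F x - c)) - x‖ + ‖v‖ := norm_sub_le _ _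
      _ ≤ R / 4 := by linarith)
  have hGv : G (c + ρ (F x - c)) = v := sub_eq_zero.1 hx0
  rcases le_total (2 * ε) ‖F x - c‖ with h2 | h2
  · rw [hfar x hx h2, hGF x hx] at hGv
    have h3 := hF.dist_le_mul x 0
    rw [hF0, dist_zero_right, dist_zero_right] at h3
    have h4 := norm_sub_le (F x) c
    rw [hGv] at h3
    rw [lt_div_iff₀ (by positivity)] at hv1
    have := norm_nonneg v
    rw [hGv] at h2 h4
    nlinarith
  · refine hvS ⟨_, ?_, hGv⟩
    simp [(hnear x hx h2).1]

end Helpers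

/-- **Invariance of domain for injective Lipschitz immersions.**
If `B ⊆ ℝⁿ` is open and `κ : B → ℝⁿ` is injective and a Lipschitz immersion (every point
has a neighborhood on which `κ` is bi-Lipschitz), then `κ(B)` is open, `κ` is a
homeomorphism of `B` onto `κ(B)`, and the inverse map is locally Lipschitz on `κ(B)`. -/
theorem injective_lipschitz_immersion_open_image
    (n : ℕ) (B : Set (EuclideanSpace ℝ (Fin n))) (hB : IsOpen B)
    (κ : EuclideanSpace ℝ (Fin n) → EuclideanSpace ℝ (Fin n))
    (hinj : Set.InjOn κ B)
    (himm : ∀ x ∈ B, ∃ U ∈ 𝓝 x, U ⊆ B ∧ ∃ c d : ℝ, 0 < c ∧ c ≤ d ∧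
      ∀ y ∈ U, ∀ z ∈ U, c * ‖y - z‖ ≤ ‖κ y - κ z‖ ∧ ‖κ y - κ z‖ ≤ d * ‖y - z‖) :
    IsOpen (κ '' B) ∧ ContinuousOn κ B ∧
    ∃ ψ : EuclideanSpace ℝ (Fin n) → EuclideanSpace ℝ (Fin n),
      (∀ x ∈ B, ψ (κ x) = x) ∧ ContinuousOn ψ (κ '' B) ∧
      ∀ y ∈ κ '' B, ∃ V ∈ 𝓝 y, V ⊆ κ '' B ∧ ∃ C : ℝ≥0, LipschitzOnWith C ψ V := by
  have hψ : ∀ x ∈ B, Function.invFunOn κ B (κ x) = x := fun x hx => hinj.leftInvOn_invFunOn hx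
  set ψ := Function.invFunOn κ B
  have hlip : ∀ U ⊆ B, ∀ c : ℝ, 0 < c → (∀ y ∈ U, ∀ z ∈ U, c * ‖y - z‖ ≤ ‖κ y - κ z‖) →
      LipschitzOnWith (Real.toNNReal c⁻¹) ψ (κ '' U) := by
    intro U hU c hc h
    apply LipschitzOnWith.of_dist_le_mul
    rintro _ ⟨y, hy, rfl⟩ _ ⟨z, hz, rfl⟩
    rw [hψ y (hU hy), hψ z (hU hz), dist_eq_norm, dist_eq_norm,
      Real.coe_toNNReal _ (by positivity), ← div_eq_inv_mul, le_div_iff₀ hc, mul_comm]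
    exact h y hy z hz
  have hnhds : ∀ x ∈ B, ∀ U ∈ 𝓝 x, U ⊆ B → (∃ c d : ℝ, 0 < c ∧ c ≤ d ∧
      ∀ y ∈ U, ∀ z ∈ U, c * ‖y - z‖ ≤ ‖κ y - κ z‖ ∧ ‖κ y - κ z‖ ≤ d * ‖y - z‖) →
      κ '' U ∈ 𝓝 (κ x) := by
    rintro x hx U hU hUB ⟨c, d, hc, hcd, h⟩
    obtain ⟨R, hR, hRU⟩ := Metric.nhds_basis_closedBall.mem_iff.1 hU
    have hd : 0 ≤ d := by linarith
    have hF : LipschitzOnWith (Real.toNNReal d) (fun w => κ (x + w) - κ x)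
        (Metric.closedBall 0 R) := by
      apply LipschitzOnWith.of_dist_le_mul
      intro y hy z hz
      have := (h (x + y) (hRU (by simpa using hy)) (x + z) (hRU (by simpa using hz))).2
      rw [dist_eq_norm, dist_eq_norm, Real.coe_toNNReal _ hd]
      simpa using this
    obtain ⟨F, hFL, hFeq⟩ := hF.extend_finite_dimension
    obtain ⟨G, hGL, hGeq⟩ := (hlip U hUB c hc fun y hy z hz => (h y hy z hz).1).extend_finite_dimension
    have key := image_mem_nhds (F := F) (G := fun y => G (y + κ x) - x) (R := R) hFL
      ((hGL.comp (LipschitzWith.id.add (LipschitzWith.const (κ x)))).sub (LipschitzWith.const x)) hR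
      (by rw [← hFeq (by simp [hR.le])]; simp) (by
        intro w hw
        have hwU : x + w ∈ U := hRU (by simpa using hw)
        rw [← hFeq (by simpa using hw)]
        simp only [sub_add_cancel]
        rw [← hGeq ⟨_, hwU, rfl⟩, hψ _ (hUB hwU), add_sub_cancel_left])
    have h2 : (fun y => y - κ x) ⁻¹' (F '' Metric.closedBall 0 R) ∈ 𝓝 (κ x) := by
      apply (continuous_id.sub continuous_const).continuousAt.preimage_mem_nhds
      simpa using key
    refine Filter.mem_of_superset h2 ?_
    rintro y ⟨w, hw, hwy⟩
    refine ⟨x + w, hRU (by simpa using hw), ?_⟩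
    rw [← hFeq hw] at hwy
    simpa using hwy
  have hloc : ∀ y ∈ κ '' B, ∃ V ∈ 𝓝 y, V ⊆ κ '' B ∧ ∃ C : ℝ≥0, LipschitzOnWith C ψ V := by
    rintro _ ⟨x, hx, rfl⟩
    obtain ⟨U, hU, hUB, c, d, hc, hcd, h⟩ := himm x hx
    exact ⟨κ '' U, hnhds x hx U hU hUB ⟨c, d, hc, hcd, h⟩, image_mono hUB, _,
      hlip U hUB c hc fun y hy z hz => (h y hy z hz).1⟩
  refine ⟨?_, ?_, ψ, hψ, ?_, hloc⟩
  · rw [isOpen_iff_mem_nhds]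
    intro y hy
    obtain ⟨V, hV, hVB, -⟩ := hloc y hy
    exact Filter.mem_of_superset hV hVB
  · intro x hx
    obtain ⟨U, hU, hUB, c, d, hc, hcd, h⟩ := himm x hx
    have : LipschitzOnWith (Real.toNNReal d) κ U := by
      apply LipschitzOnWith.of_dist_le_mul
      intro y hy z hz
      rw [dist_eq_norm, dist_eq_norm, Real.coe_toNNReal _ (by linarith)]
      exact (h y hy z hz).2
    exact (this.continuousOn.continuousAt hU).continuousWithinAt
  · intro y hy
    obtain ⟨V, hV, hVB, C, hC⟩ := hloc y hy
    exact (hC.continuousOn.continuousAt hV).continuousWithinAt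
end

section
/- Let φ : ℝⁿ → ℝⁿ be a bijection which is L-bi-Lipschitz, i.e. (1/L)|x−y| ≤ |φ(x)−φ(y)| ≤ L|x−y| for all x, y. Then for every Borel set U ⊆ ℝⁿ and every x ∈ ℝⁿ: the density d(x,U) exists and equals 0 if and only if d(φ(x), φ(U)) exists and equals 0, and d(x,U) exists and equals 1 if and only if d(φ(x), φ(U)) exists and equals 1. Consequently the essential boundary transforms naturally: ∂*(φ(U)) = φ(∂*U). -/
/-!
A `K`-Lipschitz self-map of `ℝⁿ` multiplies Lebesgue measure by at most `Kⁿ`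
(`volume_image_le_of_lipschitzWith`), because Lebesgue measure is a multiple of the `n`-dimensional
Hausdorff measure. If `f` and its inverse `g` are both `K`-Lipschitz, then
`f(U) ∩ B(f x, r) ⊆ f(U ∩ B(x, K r))`, and since `B(x, K r)` has `Kⁿ` times the volume of a ball of
radius `r`, the density ratio of `f(U)` at `f x` and scale `r` is at most `K²ⁿ` times the density
ratio of `U` at `x` and scale `K r`. Hence density `0` is carried from `U` to `f(U)`
(`HasDensity.image_zero`), and the converse follows by exchanging `f` and `g`. Density `1` is
density `0` of the complement (`hasDensity_one_iff_compl`), and the statement about essential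
boundaries is then formal.
-/

open MeasureTheory Metric Set Filter Topology
open scoped ENNReal

/-- The set `U` has density `d` at the point `x`:  the ratio
`Lⁿ(U ∩ B(x,r)) / Lⁿ(B(x,r))` tends to `d` as `r → 0⁺`. -/
def HasDensity {n : ℕ} (U : Set (EuclideanSpace ℝ (Fin n)))
    (x : EuclideanSpace ℝ (Fin n)) (d : ℝ≥0∞) : Prop :=
  Tendsto (fun r : ℝ => volume (U ∩ ball x r) / volume (ball x r)) (𝓝[>] 0) (𝓝 d)

/-- The essential (measure-theoretic) boundary of `U`: the set of points `x` where the
density of `U` neither (exists and equals `0`) nor (exists and equals `1`). -/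
def essentialBoundary {n : ℕ} (U : Set (EuclideanSpace ℝ (Fin n))) :
    Set (EuclideanSpace ℝ (Fin n)) :=
  {x | ¬ HasDensity U x 0 ∧ ¬ HasDensity U x 1}

open scoped NNReal

/-- Lebesgue measure is a Haar measure, hence a finite multiple of `n`-dimensional Hausdorff
measure, for which the bound is in the library. -/
lemma volume_image_le_of_lipschitzWith {n : ℕ} {K : ℝ≥0}
    {f : EuclideanSpace ℝ (Fin n) → EuclideanSpace ℝ (Fin n)} (hf : LipschitzWith K f)
    (s : Set (EuclideanSpace ℝ (Fin n))) :
    volume (f '' s) ≤ (K : ℝ≥0∞) ^ n * volume s := by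
  have hfin : Module.finrank ℝ (EuclideanSpace ℝ (Fin n)) = n := by simp
  have hhaar : (Measure.hausdorffMeasure (n : ℝ) :
      Measure (EuclideanSpace ℝ (Fin n))).IsAddHaarMeasure := by
    have h := MeasureTheory.isAddHaarMeasure_hausdorffMeasure (E := EuclideanSpace ℝ (Fin n))
    rwa [hfin] at h
  obtain ⟨c, hc⟩ : ∃ c : ℝ≥0, (volume : Measure (EuclideanSpace ℝ (Fin n))) =
      c • Measure.hausdorffMeasure (n : ℝ) :=
    ⟨_, Measure.isAddLeftInvariant_eq_smul _ _⟩
  have h := hf.hausdorffMeasure_image_le (d := (n : ℝ)) (Nat.cast_nonneg n) s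
  rw [ENNReal.rpow_natCast] at h
  rw [hc, Measure.smul_apply, Measure.smul_apply, ENNReal.smul_def, smul_eq_mul, ENNReal.smul_def,
    smul_eq_mul, mul_left_comm]
  gcongr

lemma HasDensity.image_zero {n : ℕ} {K : ℝ≥0} (hK : 0 < K)
    {f g : EuclideanSpace ℝ (Fin n) → EuclideanSpace ℝ (Fin n)}
    (hf : LipschitzWith K f) (hg : LipschitzWith K g) (hgf : Function.LeftInverse g f)
    {U : Set (EuclideanSpace ℝ (Fin n))} {x : EuclideanSpace ℝ (Fin n)}
    (h : HasDensity U x 0) : HasDensity (f '' U) (f x) 0 := by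
  unfold HasDensity at h ⊢
  have hscale : Tendsto (fun r : ℝ => (K : ℝ) * r) (𝓝[>] 0) (𝓝[>] 0) := by
    refine tendsto_nhdsWithin_iff.2 ⟨?_, ?_⟩
    · have : Tendsto (fun r : ℝ => (K : ℝ) * r) (𝓝 0) (𝓝 ((K : ℝ) * 0)) :=
        (continuous_const.mul continuous_id).tendsto 0
      rw [mul_zero] at this
      exact this.mono_left nhdsWithin_le_nhds
    · filter_upwards [self_mem_nhdsWithin] with r hr
      exact mul_pos (NNReal.coe_pos.2 hK) hr
  have hC : (K : ℝ≥0∞) ^ n * (K : ℝ≥0∞) ^ n ≠ ∞ := by finiteness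
  have hlim := ENNReal.Tendsto.const_mul (h.comp hscale) (Or.inr hC)
  rw [mul_zero] at hlim
  refine tendsto_of_tendsto_of_tendsto_of_le_of_le' tendsto_const_nhds hlim
    (Eventually.of_forall fun _ => zero_le) ?_
  filter_upwards [self_mem_nhdsWithin] with r hr
  have hsub : f '' U ∩ ball (f x) r ⊆ f '' (U ∩ ball x (K * r)) := by
    rintro _ ⟨⟨y, hy, rfl⟩, hyr⟩
    refine ⟨y, ⟨hy, ?_⟩, rfl⟩
    have h1 := hg.dist_le_mul (f y) (f x)
    rw [hgf, hgf] at h1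
    exact h1.trans_lt (mul_lt_mul_of_pos_left hyr (NNReal.coe_pos.2 hK))
  have hball : volume (ball x (K * r)) = (K : ℝ≥0∞) ^ n * volume (ball (f x) r) := by
    rw [Measure.addHaar_ball_mul_of_pos volume x (NNReal.coe_pos.2 hK),
      Measure.addHaar_ball_center volume (f x), finrank_euclideanSpace_fin,
      ENNReal.ofReal_pow K.coe_nonneg, ENNReal.ofReal_coe_nnreal]
  have hKn0 : (K : ℝ≥0∞) ^ n ≠ 0 := pow_ne_zero _ (by exact_mod_cast hK.ne')
  have hKn : (K : ℝ≥0∞) ^ n ≠ ∞ := by finiteness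
  calc volume (f '' U ∩ ball (f x) r) / volume (ball (f x) r)
      ≤ (K : ℝ≥0∞) ^ n * volume (U ∩ ball x (K * r)) / volume (ball (f x) r) := by
        gcongr
        exact (measure_mono hsub).trans (volume_image_le_of_lipschitzWith hf _)
    _ = (K : ℝ≥0∞) ^ n * (K : ℝ≥0∞) ^ n *
          (volume (U ∩ ball x (K * r)) / volume (ball x (K * r))) := by
        rw [hball, mul_assoc, ← mul_div_assoc ((K : ℝ≥0∞) ^ n) (volume _),
          ENNReal.mul_div_mul_left _ _ hKn0 hKn, mul_div_assoc]

lemma hasDensity_zero_iff_image {n : ℕ} {K : ℝ≥0} (hK : 0 < K)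
    {f g : EuclideanSpace ℝ (Fin n) → EuclideanSpace ℝ (Fin n)}
    (hf : LipschitzWith K f) (hg : LipschitzWith K g) (hgf : Function.LeftInverse g f)
    (hfg : Function.RightInverse g f)
    (U : Set (EuclideanSpace ℝ (Fin n))) (x : EuclideanSpace ℝ (Fin n)) :
    HasDensity U x 0 ↔ HasDensity (f '' U) (f x) 0 := by
  refine ⟨fun h => h.image_zero hK hf hg hgf, fun h => ?_⟩
  have h' := h.image_zero hK hg hf hfg
  rwa [hgf.image_image, hgf] at h'

/-- At every scale `r > 0` the density ratios of `U` and `Uᶜ` add up to `1`. -/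
lemma hasDensity_one_iff_compl {n : ℕ} {U : Set (EuclideanSpace ℝ (Fin n))}
    (hU : MeasurableSet U) (x : EuclideanSpace ℝ (Fin n)) :
    HasDensity U x 1 ↔ HasDensity Uᶜ x 0 := by
  have hsum : ∀ r : ℝ, 0 < r →
      volume (U ∩ ball x r) / volume (ball x r) +
        volume (Uᶜ ∩ ball x r) / volume (ball x r) = 1 := by
    intro r hr
    rw [← ENNReal.add_div, inter_comm U, inter_comm Uᶜ, ← sdiff_eq, measure_inter_add_sdiff _ hU]
    exact ENNReal.div_self (measure_ball_pos volume x hr).ne' measure_ball_lt_top.ne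
  have hle : ∀ (V : Set (EuclideanSpace ℝ (Fin n))) (r : ℝ),
      volume (V ∩ ball x r) / volume (ball x r) ≠ ∞ := fun V r =>
    ((ENNReal.div_le_of_le_mul (by
      rw [one_mul]; exact measure_mono inter_subset_right)).trans_lt ENNReal.one_lt_top).ne
  unfold HasDensity
  constructor
  · intro h
    have h' := ENNReal.Tendsto.sub tendsto_const_nhds h (Or.inl ENNReal.one_ne_top)
    rw [tsub_self] at h'
    refine h'.congr' ?_
    filter_upwards [self_mem_nhdsWithin] with r hr
    exact ENNReal.sub_eq_of_eq_add_rev (hle U r) (hsum r hr).symm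
  · intro h
    have h' := ENNReal.Tendsto.sub tendsto_const_nhds h (Or.inl ENNReal.one_ne_top)
    rw [tsub_zero] at h'
    refine h'.congr' ?_
    filter_upwards [self_mem_nhdsWithin] with r hr
    exact ENNReal.sub_eq_of_eq_add (hle Uᶜ r) (hsum r hr).symm

/-- An `L`-bi-Lipschitz bijection `φ : ℝⁿ → ℝⁿ` preserves points of density `0` and points
of density `1` of any Borel set, so the essential boundary transforms naturally:
`∂*(φ(U)) = φ(∂*U)`. -/
theorem essentialBoundary_image_biLipschitz
    (n : ℕ) (L : ℝ) (hL : 0 < L)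
    (φ : EuclideanSpace ℝ (Fin n) → EuclideanSpace ℝ (Fin n))
    (hbij : Function.Bijective φ)
    (hbl : ∀ x y : EuclideanSpace ℝ (Fin n),
      (1 / L) * ‖x - y‖ ≤ ‖φ x - φ y‖ ∧ ‖φ x - φ y‖ ≤ L * ‖x - y‖)
    (U : Set (EuclideanSpace ℝ (Fin n))) (hU : MeasurableSet U) :
    (∀ x : EuclideanSpace ℝ (Fin n),
      (HasDensity U x 0 ↔ HasDensity (φ '' U) (φ x) 0) ∧
      (HasDensity U x 1 ↔ HasDensity (φ '' U) (φ x) 1)) ∧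
    essentialBoundary (φ '' U) = φ '' essentialBoundary U := by
  obtain ⟨g, hgf, hfg⟩ := Function.bijective_iff_has_inverse.1 hbij
  have hKL : (L.toNNReal : ℝ) = L := Real.coe_toNNReal L hL.le
  have hK : 0 < L.toNNReal := Real.toNNReal_pos.2 hL
  have hf : LipschitzWith L.toNNReal φ := LipschitzWith.of_dist_le_mul fun x y => by
    rw [hKL, dist_eq_norm, dist_eq_norm]
    exact (hbl x y).2
  have hg : LipschitzWith L.toNNReal g := LipschitzWith.of_dist_le_mul fun x y => by
    have h := (hbl (g x) (g y)).1
    rw [hfg, hfg, one_div, inv_mul_le_iff₀ hL] at h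
    rwa [hKL, dist_eq_norm, dist_eq_norm]
  have himg : MeasurableSet (φ '' U) := by
    rw [image_eq_preimage_of_inverse hgf hfg]
    exact hg.continuous.measurable hU
  have hzero := hasDensity_zero_iff_image hK hf hg hgf hfg
  have hone : ∀ x, HasDensity U x 1 ↔ HasDensity (φ '' U) (φ x) 1 := fun x => by
    rw [hasDensity_one_iff_compl hU, hasDensity_one_iff_compl himg, ← image_compl_eq hbij]
    exact hzero Uᶜ x
  refine ⟨fun x => ⟨hzero U x, hone x⟩, ?_⟩
  ext y
  obtain ⟨x, rfl⟩ := hbij.2 y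
  rw [hbij.1.mem_set_image]
  simp only [essentialBoundary, mem_ofPred_eq, hzero U x, hone x]
end
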